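/- For every complex z with |z| < 1/e, the identity e^{W₀(z)} = z/W₀(z) = 1 + ∑_{k=0}^∞ ((-k)^k/(k+1)!) z^{k+1} holds, where W₀ is the principal branch of the Lambert W function and (-0)^0 = 1. -/

import Mathlib

/-!
Differentiating `E = exp ∘ W₀` by means of `W₀ * exp W₀ = id` gives `E' = 1 / (1 + W₀)`, while the claimed
series differentiates termwise to `G z = ∑ (-k)^k / k! z^k`. It therefore suffices that
`G = 1 / (1 + W₀)`, since `E` and the claimed series both take the value `1` at `0`.

This is proved near `0` by substituting `z = w * exp w` (`tsum_lamTerm_mul_exp`): expanding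
`exp (k * w)`, the coefficient of `w ^ n` in the resulting absolutely convergent double series is
`(1 / n!) ∑ k, n.choose k * (-1)^k * k^n`, which is `(-1)^n` because the `n`-th finite difference
of `k ↦ k^n` is `n!` (`sum_antidiagonal_pow`). Hence `G (w * exp w) = ∑ (-w)^n = 1 / (1 + w)`.

The identity theorem extends the equality of derivatives to the whole disk. There `W₀` is
holomorphic, as a continuous right inverse of `w ↦ w * exp w`, whose derivative vanishes only at
`w = -1`; that value is not taken, since it corresponds to `z = -1/e`. The series converges in the
disk because `k^k / k! ≤ e^k`.
-/

open Complex

/-- The `k`-th term of the power series `∑ (-k)^k / k! x^k`, whose sum is `1 / (1 + W₀ x)`. -/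
noncomputable def lamTerm (k : ℕ) (x : ℂ) : ℂ :=
  (-(k : ℂ)) ^ k / (Nat.factorial k : ℂ) * x ^ k

lemma pow_self_div_factorial_le (k : ℕ) :
    (k : ℝ) ^ k / (Nat.factorial k : ℝ) ≤ Real.exp 1 ^ k := by
  have := Real.pow_div_factorial_le_exp (k : ℝ) (Nat.cast_nonneg k) k
  rwa [← mul_one (k : ℝ), Real.exp_nat_mul, mul_one] at this

lemma norm_lamTerm (k : ℕ) (x : ℂ) :
    ‖lamTerm k x‖ = (k : ℝ) ^ k / (Nat.factorial k : ℝ) * ‖x‖ ^ k := by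
  simp [lamTerm]

lemma pow_self_term_le {r : ℝ} (hr : 0 ≤ r) (k : ℕ) :
    (k : ℝ) ^ k / (Nat.factorial k : ℝ) * r ^ k ≤ (Real.exp 1 * r) ^ k := by
  rw [mul_pow]
  exact mul_le_mul_of_nonneg_right (pow_self_div_factorial_le k) (by positivity)

/-- The geometric series dominating `∑ k^k / k! r^k` converges for `r < 1/e`. -/
lemma summable_geom {r : ℝ} (hr : 0 ≤ r) (h : r < Real.exp (-1)) :
    Summable fun k : ℕ => (Real.exp 1 * r) ^ k := by
  refine summable_geometric_of_lt_one (by positivity) ?_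
  calc Real.exp 1 * r < Real.exp 1 * Real.exp (-1) := by gcongr
    _ = 1 := by rw [← Real.exp_add]; simp

/-- The `n`-th finite difference of `k ↦ k ^ n` is `n!`; this evaluates the diagonal sums of the
double series for `∑ lamTerm k (w * exp w)`. -/
lemma sum_antidiagonal_pow (n : ℕ) :
    ∑ p ∈ Finset.HasAntidiagonal.antidiagonal n,
      (-(p.1 : ℂ)) ^ p.1 * (p.1 : ℂ) ^ p.2 / ((Nat.factorial p.1 : ℂ) * (Nat.factorial p.2 : ℂ))
      = (-1) ^ n := by
  have h := congrFun (fwdDiff_iter_eq_factorial (R := ℂ) (n := n)) 0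
  rw [fwdDiff_iter_eq_sum_shift] at h
  have hn : (Nat.factorial n : ℂ) ≠ 0 := by exact_mod_cast Nat.factorial_ne_zero n
  rw [Finset.Nat.sum_antidiagonal_eq_sum_range_succ_mk]
  apply mul_left_cancel₀ hn
  rw [Finset.mul_sum]
  have h' : (n.factorial : ℂ) * (-1) ^ n = (-1) ^ n * (n.factorial : ℂ → ℂ) 0 := mul_comm _ _
  rw [h', ← h, Finset.mul_sum]
  refine Finset.sum_congr rfl fun k hk => ?_
  have hk : k ≤ n := Nat.lt_succ_iff.mp (Finset.mem_range.mp hk)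
  obtain ⟨j, rfl⟩ := Nat.exists_eq_add_of_le hk
  have hc : ((k + j).factorial : ℂ) = ((k + j).choose k : ℂ) * k.factorial * j.factorial := by
    rw [← Nat.add_choose_mul_factorial_mul_factorial k j, Nat.choose_symm_add]
    push_cast
    ring
  have h1 : (k.factorial : ℂ) ≠ 0 := by exact_mod_cast Nat.factorial_ne_zero k
  have h2 : (j.factorial : ℂ) ≠ 0 := by exact_mod_cast Nat.factorial_ne_zero j
  have hs : ((-1 : ℂ) ^ j) * (-1) ^ j = 1 := by rw [← mul_pow]; simp
  rw [hc, neg_pow, pow_add (-1 : ℂ)]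
  simp only [add_tsub_cancel_left, zsmul_eq_mul, nsmul_eq_mul, mul_one, zero_add]
  push_cast
  field_simp
  linear_combination (- ((k + j).choose k : ℂ) * (k : ℂ) ^ (k + j)) * hs

/-- The function `∑ lamTerm k` at `w * exp w`, for small `w`. The hypothesis is what makes the double
series in `w` absolutely convergent, and it forces `‖w‖ < 1`. -/
lemma tsum_lamTerm_mul_exp {w : ℂ} (hw : ‖w‖ * Real.exp ‖w‖ < Real.exp (-1)) :
    ∑' k : ℕ, lamTerm k (w * Complex.exp w) = (1 + w)⁻¹ := by
  have hw1 : ‖w‖ < 1 := by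
    by_contra! h
    have h1 : Real.exp (-1) ≤ Real.exp ‖w‖ := Real.exp_le_exp.mpr (by linarith)
    nlinarith [Real.exp_pos ‖w‖]
  set f : ℕ × ℕ → ℂ := fun p =>
    ((-(p.1 : ℂ)) ^ p.1 / (p.1.factorial : ℂ) * w ^ p.1) *
      (((p.1 : ℂ) * w) ^ p.2 / (p.2.factorial : ℂ)) with hf
  have hrow (k : ℕ) : HasSum (fun j => f (k, j)) (lamTerm k (w * Complex.exp w)) := by
    have h := (NormedSpace.expSeries_div_hasSum_exp ((k : ℂ) * w)).mul_left
      ((-(k : ℂ)) ^ k / (k.factorial : ℂ) * w ^ k)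
    have e : lamTerm k (w * Complex.exp w) = (-(k : ℂ)) ^ k / (k.factorial : ℂ) * w ^ k *
        NormedSpace.exp ((k : ℂ) * w) := by
      rw [lamTerm, ← Complex.exp_eq_exp_ℂ, Complex.exp_nat_mul]
      ring
    rw [e]
    exact h
  have hrown (k : ℕ) : HasSum (fun j => ‖f (k, j)‖)
      ((k : ℝ) ^ k / (k.factorial : ℝ) * (‖w‖ * Real.exp ‖w‖) ^ k) := by
    have h := (NormedSpace.expSeries_div_hasSum_exp ((k : ℝ) * ‖w‖)).mul_left
      ((k : ℝ) ^ k / (k.factorial : ℝ) * ‖w‖ ^ k)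
    have e : (k : ℝ) ^ k / (k.factorial : ℝ) * (‖w‖ * Real.exp ‖w‖) ^ k =
        (k : ℝ) ^ k / (k.factorial : ℝ) * ‖w‖ ^ k * NormedSpace.exp ((k : ℝ) * ‖w‖) := by
      rw [← Real.exp_eq_exp_ℝ, Real.exp_nat_mul]
      ring
    have e' : (fun j => ‖f (k, j)‖) = fun j : ℕ => (k : ℝ) ^ k / (k.factorial : ℝ) * ‖w‖ ^ k *
        (((k : ℝ) * ‖w‖) ^ j / (j.factorial : ℝ)) := by
      funext j
      simp [hf]
    rw [e, e']
    exact h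
  have hsum : Summable f := by
    refine Summable.of_norm ((summable_prod_of_nonneg fun p => norm_nonneg _).mpr
      ⟨fun k => (hrown k).summable, ?_⟩)
    simp_rw [fun k => (hrown k).tsum_eq]
    exact Summable.of_nonneg_of_le (fun k => by positivity)
      (fun k => pow_self_term_le (by positivity) k) (summable_geom (by positivity) hw)
  -- The same double sum, taken by rows and by diagonals.
  have h1 : HasSum (fun k => lamTerm k (w * Complex.exp w)) (∑' p, f p) :=
    hsum.hasSum.prod_fiberwise hrow
  have h2 : HasSum (fun n : ℕ => (-w) ^ n) (∑' p, f p) := by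
    have h := (Finset.HasAntidiagonal.sigmaAntidiagonalEquivProd (A := ℕ)).hasSum_iff.mpr hsum.hasSum
    refine h.sigma fun n => ?_
    have h3 := hasSum_fintype fun c : Finset.HasAntidiagonal.antidiagonal n => f c
    refine (?_ : _ = (-w) ^ n) ▸ h3
    rw [Finset.univ_eq_attach, Finset.sum_attach _ f, neg_pow, ← sum_antidiagonal_pow n,
      Finset.sum_mul]
    refine Finset.sum_congr rfl fun p hp => ?_
    rw [← Finset.HasAntidiagonal.mem_antidiagonal.mp hp, hf]
    simp only [pow_add, mul_pow]
    ring
  rw [h1.tsum_eq, h2.unique (hasSum_geometric_of_norm_lt_one (by simpa using hw1)), sub_neg_eq_add]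

/-- Termwise differentiation of the claimed series inside the disk of radius `1/e`. -/
lemma hasDerivAt_series {z : ℂ} (hz : ‖z‖ < Real.exp (-1)) :
    HasDerivAt (fun z : ℂ => 1 + ∑' k : ℕ,
      ((-(k : ℂ)) ^ k / (Nat.factorial (k + 1) : ℂ)) * z ^ (k + 1)) (∑' k, lamTerm k z) z := by
  obtain ⟨r, hzr, hr⟩ := exists_between hz
  have hr0 : 0 < r := (norm_nonneg z).trans_lt hzr
  refine HasDerivAt.const_add 1 ?_
  refine hasDerivAt_tsum_of_isPreconnected (t := Metric.ball 0 r) (y₀ := 0)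
    (summable_geom hr0.le hr) Metric.isOpen_ball (convex_ball _ _).isPreconnected
    (fun k y _ => ?_) (fun k y hy => ?_) (by simpa using hr0) (by simp) (by simpa using hzr)
  · have h := (hasDerivAt_pow (k + 1) y).const_mul
      ((-(k : ℂ)) ^ k / (Nat.factorial (k + 1) : ℂ))
    refine h.congr_deriv ?_
    have h1 : (k.factorial : ℂ) ≠ 0 := by exact_mod_cast Nat.factorial_ne_zero k
    have h2 : (k : ℂ) + 1 ≠ 0 := by exact_mod_cast Nat.succ_ne_zero k
    rw [lamTerm, Nat.factorial_succ]
    push_cast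
    field_simp
  · have hy : ‖y‖ ≤ r := by simpa using (Metric.mem_ball.mp hy).le
    rw [norm_lamTerm]
    refine le_trans ?_ (pow_self_term_le hr0.le k)
    gcongr

theorem stmt_17 (W₀ : ℂ → ℂ)
    (hW0 : W₀ 0 = 0)
    (hWc : ContinuousOn W₀ (Metric.ball (0 : ℂ) (Real.exp (-1))))
    (hW : ∀ z : ℂ, ‖z‖ < Real.exp (-1) → W₀ z * Complex.exp (W₀ z) = z) :
    ∀ z : ℂ, ‖z‖ < Real.exp (-1) →
      (Complex.exp (W₀ z) =
        1 + ∑' k : ℕ, ((-(k : ℂ)) ^ k / (Nat.factorial (k + 1) : ℂ)) * z ^ (k + 1)) ∧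
      (z ≠ 0 → Complex.exp (W₀ z) = z / W₀ z) := by
  intro z hz
  refine ⟨?_, fun hz0 => ?_⟩
  swap
  · have hne : W₀ z ≠ 0 := fun h => hz0 (by rw [← hW z hz, h, zero_mul])
    rw [eq_div_iff hne, mul_comm, hW z hz]
  set U := Metric.ball (0 : ℂ) (Real.exp (-1)) with hU
  have hUo : IsOpen U := Metric.isOpen_ball
  have hUc : IsPreconnected U := (convex_ball _ _).isPreconnected
  have hmem {y : ℂ} : y ∈ U ↔ ‖y‖ < Real.exp (-1) := by simp [hU]
  have h0 : (0 : ℂ) ∈ U := hmem.mpr (by simpa using Real.exp_pos (-1))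
  have hne {y : ℂ} (hy : y ∈ U) : 1 + W₀ y ≠ 0 := by
    intro h
    have h1 : W₀ y = -1 := by linear_combination h
    have h2 := hW y (hmem.mp hy)
    have h3 := hmem.mp hy
    rw [← h2, h1, norm_mul, Complex.norm_exp] at h3
    simp at h3
  have hE {y : ℂ} (hy : y ∈ U) :
      HasDerivAt (fun y => Complex.exp (W₀ y)) (1 + W₀ y)⁻¹ y := by
    have hf : HasDerivAt (fun w : ℂ => w * Complex.exp w)
        (Complex.exp (W₀ y) * (1 + W₀ y)) (W₀ y) := by
      have h := (hasDerivAt_id (W₀ y)).mul (Complex.hasDerivAt_exp (W₀ y))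
      refine h.congr_deriv ?_
      rw [id]
      ring
    have hW' : HasDerivAt W₀ (Complex.exp (W₀ y) * (1 + W₀ y))⁻¹ y :=
      HasDerivAt.of_local_left_inverse (hWc.continuousAt (hUo.mem_nhds hy)) hf
        (mul_ne_zero (Complex.exp_ne_zero _) (hne hy))
        (Filter.eventually_of_mem (hUo.mem_nhds hy) fun x hx => hW x (hmem.mp hx))
    refine hW'.cexp.congr_deriv ?_
    have := Complex.exp_ne_zero (W₀ y)
    have := hne hy
    field_simp
  set F : ℂ → ℂ := fun z : ℂ => 1 + ∑' k : ℕ,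
      ((-(k : ℂ)) ^ k / (Nat.factorial (k + 1) : ℂ)) * z ^ (k + 1) with hF
  have hF' {y : ℂ} (hy : y ∈ U) : HasDerivAt F (∑' k, lamTerm k y) y :=
    hasDerivAt_series (hmem.mp hy)
  have hEd : DifferentiableOn ℂ (fun y => Complex.exp (W₀ y)) U :=
    fun y hy => (hE hy).differentiableAt.differentiableWithinAt
  have hFd : DifferentiableOn ℂ F U :=
    fun y hy => (hF' hy).differentiableAt.differentiableWithinAt
  have hloc : deriv (fun y => Complex.exp (W₀ y)) =ᶠ[nhds 0] deriv F := by
    have hcont : ContinuousAt (fun y => ‖W₀ y‖ * Real.exp ‖W₀ y‖) 0 := by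
      have := hWc.continuousAt (hUo.mem_nhds h0)
      fun_prop
    have hsmall : ∀ᶠ y in nhds (0 : ℂ), ‖W₀ y‖ * Real.exp ‖W₀ y‖ < Real.exp (-1) :=
      hcont.eventually_lt_const (by simpa [hW0] using Real.exp_pos (-1))
    filter_upwards [hsmall, hUo.mem_nhds h0] with y hy hyU
    rw [(hE hyU).deriv, (hF' hyU).deriv, ← tsum_lamTerm_mul_exp hy, hW y (hmem.mp hyU)]
  have hderiv : Set.EqOn (deriv fun y => Complex.exp (W₀ y)) (deriv F) U :=
    ((hEd.deriv hUo).analyticOnNhd hUo).eqOn_of_preconnected_of_eventuallyEq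
      ((hFd.deriv hUo).analyticOnNhd hUo) hUc h0 hloc
  exact hUo.eqOn_of_deriv_eq hUc hEd hFd hderiv h0 (by simp [hF, hW0]) (hmem.mpr hz)
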